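/- The schemes ALLdistr, modalD (∀x¬φ → ¬∀xφ), modal4 (∀xφ → ∀x∀xφ), modal5, vacGen, denot, subst, and genEq are all supertrue. -/

import Mathlib

set_option autoImplicit false

/-! ## Megill-style scheme-level formalization of first-order logic -/

/-- Metavariables: variable metavariables `vr i` (standing for x_i) and
formula metavariables `fm i` (standing for φ_i). -/
inductive MV : Type
  | vr (i : ℕ) : MV
  | fm (i : ℕ) : MV
  deriving DecidableEq

/-- Metaformulas over the pure language of equality. -/
inductive MF : Type
  | phi (i : ℕ) : MF
  | eq (i j : ℕ) : MF
  | imp (a b : MF) : MF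
  | not (a : MF) : MF
  | all (i : ℕ) (a : MF) : MF
  deriving DecidableEq

/-- The set of metavariables occurring in a metaformula. -/
def MF.OC : MF → Set MV
  | .phi i => {MV.fm i}
  | .eq i j => {MV.vr i, MV.vr j}
  | .imp a b => a.OC ∪ b.OC
  | .not a => a.OC
  | .all i a => insert (MV.vr i) a.OC

/-- A scheme: finitely many hypotheses, a conclusion, and disjoint-variable
(DV) conditions given as unordered pairs of metavariables. -/
structure Scheme : Type where
  hyps : Finset MF
  concl : MF
  dv : Set (Sym2 MV)

/-- Metavariables occurring in a scheme (in its hypotheses or conclusion). -/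
def Scheme.OC (Φ : Scheme) : Set MV :=
  {m | ∃ h ∈ Φ.hyps, m ∈ h.OC} ∪ Φ.concl.OC

/-- A (type-preserving) substitution: variable metavariables go to variable
metavariables, formula metavariables go to metaformulas; it is the identity
outside a finite set. -/
structure Subst : Type where
  vr : ℕ → ℕ
  fm : ℕ → MF
  finVr : {i : ℕ | vr i ≠ i}.Finite
  finFm : {i : ℕ | fm i ≠ MF.phi i}.Finite

/-- Action of a substitution on a metaformula. -/
def MF.substMF (σ : Subst) : MF → MF
  | .phi i => σ.fm i
  | .eq i j => .eq (σ.vr i) (σ.vr j)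
  | .imp a b => .imp (a.substMF σ) (b.substMF σ)
  | .not a => .not (a.substMF σ)
  | .all i a => .all (σ.vr i) (a.substMF σ)

/-- The set of metavariables occurring in the image of a metavariable. -/
def Subst.appMV (σ : Subst) : MV → Set MV
  | .vr i => {MV.vr (σ.vr i)}
  | .fm i => (σ.fm i).OC

/-- σ is the identity on a given metavariable. -/
def Subst.Fixes (σ : Subst) : MV → Prop
  | .vr i => σ.vr i = i
  | .fm i => σ.fm i = MF.phi i

/-- A substitution is legitimate on a scheme if it does not violate its
DV conditions. -/
def Subst.Legit (σ : Subst) (Φ : Scheme) : Prop :=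
  ∀ m n : MV, s(m, n) ∈ Φ.dv → σ.appMV m ∩ σ.appMV n = ∅

/-- Propagation of DV conditions along a substitution. -/
def Subst.dvMap (σ : Subst) (D : Set (Sym2 MV)) : Set (Sym2 MV) :=
  {q | ∃ m' n' m n : MV, s(m', n') ∈ D ∧ m ∈ σ.appMV m' ∧ n ∈ σ.appMV n' ∧ q = s(m, n)}

/-- Action of a substitution on a scheme. -/
def Scheme.substS (Φ : Scheme) (σ : Subst) : Scheme :=
  ⟨Φ.hyps.image (MF.substMF σ), Φ.concl.substMF σ, σ.dvMap Φ.dv⟩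

/-- `Φ.Inst Ψ` : Ψ is an instance of Φ, i.e. the result of a legitimate
substitution, possibly followed by the addition of DV conditions. -/
def Scheme.Inst (Φ Ψ : Scheme) : Prop :=
  ∃ σ : Subst, σ.Legit Φ ∧ Ψ.hyps = Φ.hyps.image (MF.substMF σ) ∧
    Ψ.concl = Φ.concl.substMF σ ∧ σ.dvMap Φ.dv ⊆ Ψ.dv

/-- Metavariables occurring in a list of metaformulas. -/
def listOC (P : List MF) : Set MV := {m | ∃ f ∈ P, m ∈ f.OC}

/-- The DV conditions of a proof `P` of the scheme `Φ`: those of `Φ`, plus all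
pairs {m, n} where m is a dummy metavariable of `P` and n occurs in `P`. -/
def proofDV (Φ : Scheme) (P : List MF) : Set (Sym2 MV) :=
  Φ.dv ∪ {q | ∃ m n : MV, m ∈ listOC P ∧ m ∉ Φ.OC ∧ n ∈ listOC P ∧ q = s(m, n)}

/-- `P` is a proof of the scheme `Φ` from the set `S` of schemes. -/
def IsProof (S : Set Scheme) (Φ : Scheme) (P : List MF) : Prop :=
  P ≠ [] ∧ P.getLast? = some Φ.concl ∧
  ∀ (k : ℕ) (hk : k < P.length),
    P.get ⟨k, hk⟩ ∈ Φ.hyps ∨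
    ∃ hs : Finset MF,
      (∀ h ∈ hs, ∃ (l : ℕ) (hl : l < k), P.get ⟨l, hl.trans hk⟩ = h) ∧
      ∃ Ξ ∈ S, Ξ.Inst ⟨hs, P.get ⟨k, hk⟩, proofDV Φ P⟩

/-- `S ⊢ Φ` : the scheme `Φ` is provable from the set `S` of schemes. -/
def Provable (S : Set Scheme) (Φ : Scheme) : Prop := ∃ P : List MF, IsProof S Φ P

/-! ## Object level: first-order formulas and semantics -/

/-- First-order formulas over the pure language of equality, with
individual variables v_i. -/
inductive FM : Type
  | eq (i j : ℕ) : FM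
  | imp (a b : FM) : FM
  | not (a : FM) : FM
  | all (i : ℕ) (a : FM) : FM
  deriving DecidableEq

/-- Variables occurring in a first-order formula. -/
def FM.vars : FM → Set ℕ
  | .eq i j => {i, j}
  | .imp a b => a.vars ∪ b.vars
  | .not a => a.vars
  | .all i a => insert i a.vars

/-- An object-substitution: variable metavariables go to individual variables,
formula metavariables go to first-order formulas. -/
structure OSubst : Type where
  vr : ℕ → ℕ
  fm : ℕ → FM

/-- Action of an object-substitution on a metaformula, yielding a first-order
formula (an object-instance). -/
def MF.osubst (τ : OSubst) : MF → FM
  | .phi i => τ.fm i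
  | .eq i j => .eq (τ.vr i) (τ.vr j)
  | .imp a b => .imp (a.osubst τ) (b.osubst τ)
  | .not a => .not (a.osubst τ)
  | .all i a => .all (τ.vr i) (a.osubst τ)

/-- Variables occurring in the image of a metavariable. -/
def OSubst.appVars (τ : OSubst) : MV → Set ℕ
  | .vr i => {τ.vr i}
  | .fm i => (τ.fm i).vars

/-- An object-substitution is legitimate on a scheme if images of DV-paired
metavariables share no variables. -/
def OSubst.Legit (τ : OSubst) (Φ : Scheme) : Prop :=
  ∀ m n : MV, s(m, n) ∈ Φ.dv → τ.appVars m ∩ τ.appVars n = ∅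

/-- Evaluation of a first-order formula in a structure with domain `D`
(equality interpreted as equality) under an assignment `ρ`. -/
def FM.eval {D : Type} (ρ : ℕ → D) : FM → Prop
  | .eq i j => ρ i = ρ j
  | .imp a b => a.eval ρ → b.eval ρ
  | .not a => ¬ a.eval ρ
  | .all i a => ∀ d : D, a.eval (Function.update ρ i d)

/-- Validity of a first-order formula in the structure with domain `D`. -/
def FM.Valid (D : Type) (f : FM) : Prop := ∀ ρ : ℕ → D, f.eval ρ

/-- A scheme is true if for every legitimate object-instance and every
nonempty domain, the conclusion is valid whenever all hypotheses are. -/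
def Scheme.IsTrue (Φ : Scheme) : Prop :=
  ∀ τ : OSubst, τ.Legit Φ →
    ∀ D : Type, Nonempty D →
      (∀ h ∈ Φ.hyps, FM.Valid D (h.osubst τ)) → FM.Valid D (Φ.concl.osubst τ)

/-! ## (i,j)-transforms and supertruth -/

/-- Auxiliary: (i,j)-transform with a flag recording whether we are inside the
scope of a quantifier ∀x_i. -/
def MF.transfAux (i j : ℕ) : MF → Bool → MF
  | .phi k, _ => .phi k
  | .eq a b, ins =>
      .eq (if ins = true ∧ a = j then i else a) (if ins = true ∧ b = j then i else b)
  | .imp a b, ins => .imp (a.transfAux i j ins) (b.transfAux i j ins)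
  | .not a, ins => .not (a.transfAux i j ins)
  | .all k a, ins =>
      .all (if ins = true ∧ k = j then i else k) (a.transfAux i j (ins || decide (k = i)))

/-- The (i,j)-transform of a metaformula: replace every occurrence of x_j
lying within the scope of a quantifier ∀x_i by x_i. -/
def MF.transform (i j : ℕ) (f : MF) : MF := f.transfAux i j false

/-- The (i,j)-transform of a scheme: transform hypotheses and conclusion,
keep the DV conditions. -/
def Scheme.transform (i j : ℕ) (Φ : Scheme) : Scheme :=
  ⟨Φ.hyps.image (MF.transform i j), Φ.concl.transform i j, Φ.dv⟩

/-- The (i,j)-transform (and the {i,j}-transform) is legitimate on a scheme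
if {x_i, x_j} is not among its DV conditions. -/
def Scheme.TLegit (i j : ℕ) (Φ : Scheme) : Prop := s(MV.vr i, MV.vr j) ∉ Φ.dv

/-- A (hypothesis-free) scheme is presupertrue if all the legitimate
(i,j)-transforms of all its instances (including itself) are true. -/
def Scheme.PreST (Φ : Scheme) : Prop :=
  ∀ Ψ : Scheme, (Ψ = Φ ∨ Φ.Inst Ψ) → ∀ i j : ℕ, Ψ.TLegit i j → (Ψ.transform i j).IsTrue

/-- A scheme is supertrue if every instance of it (including itself) satisfies:
whenever all legitimate (i,j)-transforms of all instances of each of its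
hypotheses (taken as hypothesis-free schemes with the inherited DV conditions)
are true, all legitimate (i,j)-transforms of all instances of its conclusion
are true. -/
def Scheme.Supertrue (Φ : Scheme) : Prop :=
  ∀ Ψ : Scheme, (Ψ = Φ ∨ Φ.Inst Ψ) →
    (∀ h ∈ Ψ.hyps, Scheme.PreST ⟨∅, h, Ψ.dv⟩) → Scheme.PreST ⟨∅, Ψ.concl, Ψ.dv⟩

/-- The {i,j}-transform of a metaformula: the composite of the (i,j)-transform
and the (j,i)-transform, the one with smaller first index performed first. -/
def MF.stransform (i j : ℕ) (f : MF) : MF :=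
  if i ≤ j then (f.transform i j).transform j i else (f.transform j i).transform i j

/-- The {i,j}-transform of a scheme. -/
def Scheme.stransform (i j : ℕ) (Φ : Scheme) : Scheme :=
  ⟨Φ.hyps.image (MF.stransform i j), Φ.concl.stransform i j, Φ.dv⟩

/-- A metaformula contains no formula metavariables. -/
def MF.FmFree : MF → Prop
  | .phi _ => False
  | .eq _ _ => True
  | .imp a b => a.FmFree ∧ b.FmFree
  | .not a => a.FmFree
  | .all _ a => a.FmFree

/-- A scheme contains no formula metavariables. -/
def Scheme.FmFree (Φ : Scheme) : Prop := (∀ h ∈ Φ.hyps, h.FmFree) ∧ Φ.concl.FmFree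

/-- A (hypothesis-free) scheme is pre-semisupertrue if all the legitimate
{i,j}-transforms of all its instances (including itself) are true. -/
def Scheme.PreSST (Φ : Scheme) : Prop :=
  ∀ Ψ : Scheme, (Ψ = Φ ∨ Φ.Inst Ψ) → ∀ i j : ℕ, Ψ.TLegit i j → (Ψ.stransform i j).IsTrue

/-- A scheme is semisupertrue if it is true and every formula-metavariable-free
instance of it satisfies: whenever all legitimate {i,j}-transforms of all
instances of each of its hypotheses are true, all legitimate {i,j}-transforms
of all instances of its conclusion are true. -/
def Scheme.Semisupertrue (Φ : Scheme) : Prop :=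
  Φ.IsTrue ∧
  ∀ Ψ : Scheme, (Ψ = Φ ∨ Φ.Inst Ψ) → Ψ.FmFree →
    (∀ h ∈ Ψ.hyps, Scheme.PreSST ⟨∅, h, Ψ.dv⟩) → Scheme.PreSST ⟨∅, Ψ.concl, Ψ.dv⟩

/-- A metaformula is quantifier-free. -/
def MF.QFree : MF → Prop
  | .phi _ => True
  | .eq _ _ => True
  | .imp a b => a.QFree ∧ b.QFree
  | .not a => a.QFree
  | .all _ _ => False

/-- A scheme is quantifier-free. -/
def Scheme.QFree (Φ : Scheme) : Prop := (∀ h ∈ Φ.hyps, h.QFree) ∧ Φ.concl.QFree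

/-! ## The axiom schemes of the system TMM
(x = x_0, y = x_1, z = x_2; φ = φ_0, ψ = φ_1, χ = φ_2, θ = φ_3, τ = φ_4) -/

def ax_mp : Scheme := ⟨{.phi 0, .imp (.phi 0) (.phi 1)}, .phi 1, ∅⟩

def ax_minimp : Scheme :=
  ⟨∅, .imp (.phi 0) (.imp (.imp (.phi 1) (.phi 2))
      (.imp (.imp (.imp (.phi 3) (.phi 1)) (.imp (.phi 2) (.phi 4)))
        (.imp (.phi 1) (.phi 4)))), ∅⟩

def ax_peirce : Scheme := ⟨∅, .imp (.imp (.imp (.phi 0) (.phi 1)) (.phi 0)) (.phi 0), ∅⟩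

def ax_contrap : Scheme :=
  ⟨∅, .imp (.imp (.phi 0) (.not (.phi 1))) (.imp (.phi 1) (.not (.phi 0))), ∅⟩

def ax_notelim : Scheme := ⟨∅, .imp (.not (.phi 0)) (.imp (.phi 0) (.phi 1)), ∅⟩

def ax_gen : Scheme := ⟨{.phi 0}, .all 0 (.phi 0), ∅⟩

def ax_ALLdistr : Scheme :=
  ⟨∅, .imp (.all 0 (.imp (.phi 0) (.phi 1))) (.imp (.all 0 (.phi 0)) (.all 0 (.phi 1))), ∅⟩

def ax_spec : Scheme := ⟨∅, .imp (.all 0 (.phi 0)) (.phi 0), ∅⟩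

def ax_modal5 : Scheme :=
  ⟨∅, .imp (.not (.all 0 (.phi 0))) (.all 0 (.not (.all 0 (.phi 0)))), ∅⟩

def ax_vacGen : Scheme := ⟨∅, .imp (.phi 0) (.all 0 (.phi 0)), {s(MV.vr 0, MV.fm 0)}⟩

def ax_ALLcomm : Scheme :=
  ⟨∅, .imp (.all 0 (.all 1 (.phi 0))) (.all 1 (.all 0 (.phi 0))), ∅⟩

def ax_EQrefl : Scheme := ⟨∅, .eq 0 0, ∅⟩

def ax_EQsymm : Scheme := ⟨∅, .imp (.eq 0 1) (.eq 1 0), ∅⟩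

def ax_EQtrans : Scheme := ⟨∅, .imp (.eq 0 1) (.imp (.eq 1 2) (.eq 0 2)), ∅⟩

def ax_denot : Scheme :=
  ⟨∅, .imp (.eq 0 0) (.not (.all 1 (.not (.eq 1 0)))), {s(MV.vr 0, MV.vr 1)}⟩

def ax_subst : Scheme :=
  ⟨∅, .all 0 (.imp (.eq 0 1) (.imp (.phi 0) (.all 0 (.imp (.eq 0 1) (.phi 0))))),
    {s(MV.vr 0, MV.vr 1), s(MV.vr 1, MV.fm 0)}⟩

def ax_ALLeq : Scheme :=
  ⟨∅, .imp (.all 0 (.eq 0 1)) (.imp (.all 0 (.phi 0)) (.all 1 (.phi 0))), ∅⟩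

def ax_genEq : Scheme :=
  ⟨∅, .imp (.not (.all 0 (.eq 0 1)))
      (.imp (.not (.all 0 (.eq 0 2))) (.imp (.eq 1 2) (.all 0 (.eq 1 2)))), ∅⟩

def ax_modalD : Scheme := ⟨∅, .imp (.all 0 (.not (.phi 0))) (.not (.all 0 (.phi 0))), ∅⟩

def ax_modal4 : Scheme := ⟨∅, .imp (.all 0 (.phi 0)) (.all 0 (.all 0 (.phi 0))), ∅⟩

/-- The system TMM. -/
def TMM : Set Scheme :=
  {ax_mp, ax_minimp, ax_peirce, ax_contrap, ax_notelim, ax_gen, ax_ALLdistr, ax_spec,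
   ax_modal5, ax_vacGen, ax_ALLcomm, ax_EQrefl, ax_EQsymm, ax_EQtrans, ax_denot,
   ax_subst, ax_ALLeq, ax_genEq}

/-- The subsystem T. -/
def Tsys : Set Scheme :=
  {ax_mp, ax_minimp, ax_peirce, ax_contrap, ax_notelim, ax_gen, ax_ALLdistr, ax_vacGen,
   ax_EQrefl, ax_EQsymm, ax_EQtrans, ax_denot}

theorem MF.mem_OC_substMF (σ : Subst) (A : MF) (m : MV) :
    m ∈ (A.substMF σ).OC ↔ ∃ n ∈ A.OC, m ∈ σ.appMV n := by
  induction A with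
  | phi i => simp [MF.substMF, MF.OC, Subst.appMV]
  | eq i j => simp [MF.substMF, MF.OC, Subst.appMV]
  | imp a b iha ihb =>
    simp only [MF.substMF, MF.OC, Set.mem_union, iha, ihb, or_and_right, exists_or]
  | not a ih => simpa [MF.substMF, MF.OC] using ih
  | all i a ih =>
    simp only [MF.substMF, MF.OC, Set.mem_insert_iff, ih]
    simp [Subst.appMV]

/-- Composition of substitutions (first `σ`, then `τ`). -/
def Subst.comp (σ τ : Subst) : Subst where
  vr i := τ.vr (σ.vr i)
  fm i := (σ.fm i).substMF τ
  finVr := by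
    refine (σ.finVr.union τ.finVr).subset ?_
    intro i hi
    by_contra hc
    simp only [Set.mem_union, Set.mem_ofPred_eq, not_or, not_not] at hc hi
    rw [hc.1] at hi
    exact hi hc.2
  finFm := by
    refine (σ.finFm.union τ.finFm).subset ?_
    intro i hi
    by_contra hc
    simp only [Set.mem_union, Set.mem_ofPred_eq, not_or, not_not] at hc hi
    rw [hc.1] at hi
    exact hi hc.2

theorem Subst.mem_appMV_comp (σ τ : Subst) (m p : MV) :
    p ∈ (σ.comp τ).appMV m ↔ ∃ n ∈ σ.appMV m, p ∈ τ.appMV n := by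
  cases m with
  | vr i => simp [Subst.appMV, Subst.comp]
  | fm i => simp only [Subst.appMV, Subst.comp]; exact MF.mem_OC_substMF _ _ _

theorem MF.substMF_comp (σ τ : Subst) (A : MF) :
    A.substMF (σ.comp τ) = (A.substMF σ).substMF τ := by
  induction A <;> simp_all [MF.substMF, Subst.comp]

/-- The identity substitution. -/
def Subst.ident : Subst where
  vr i := i
  fm i := .phi i
  finVr := by simp
  finFm := by simp

theorem MF.substMF_ident (A : MF) : A.substMF Subst.ident = A := by
  induction A <;> simp_all [MF.substMF, Subst.ident]

theorem Subst.appMV_ident (m : MV) : Subst.ident.appMV m = {m} := by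
  cases m <;> simp [Subst.appMV, Subst.ident, MF.OC]

/-- Hypothesis-free part of the notion of instance. -/
def InstC (c : MF) (D : Set (Sym2 MV)) (c' : MF) (D' : Set (Sym2 MV)) : Prop :=
  ∃ σ : Subst, (∀ m n : MV, s(m, n) ∈ D → σ.appMV m ∩ σ.appMV n = ∅) ∧
    c' = c.substMF σ ∧ σ.dvMap D ⊆ D'

theorem InstC.trans {c c' c'' : MF} {D D' D'' : Set (Sym2 MV)}
    (h : InstC c D c' D') (h' : InstC c' D' c'' D'') : InstC c D c'' D'' := by
  obtain ⟨σ, hl, rfl, hd⟩ := h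
  obtain ⟨τ, hl', rfl, hd'⟩ := h'
  refine ⟨σ.comp τ, ?_, (MF.substMF_comp _ _ _).symm, ?_⟩
  · intro m n hmn
    rw [Set.eq_empty_iff_forall_notMem]
    rintro p ⟨hp, hq⟩
    rw [Subst.mem_appMV_comp] at hp hq
    obtain ⟨a, ha, hpa⟩ := hp
    obtain ⟨b, hb, hpb⟩ := hq
    have := hl' a b (hd ⟨m, n, a, b, hmn, ha, hb, rfl⟩)
    exact (Set.eq_empty_iff_forall_notMem.1 this) p ⟨hpa, hpb⟩
  · rintro q ⟨m, n, p, r, hmn, hp, hr, rfl⟩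
    rw [Subst.mem_appMV_comp] at hp hr
    obtain ⟨a, ha, hpa⟩ := hp
    obtain ⟨b, hb, hpb⟩ := hr
    exact hd' ⟨a, b, p, r, hd ⟨m, n, a, b, hmn, ha, hb, rfl⟩, hpa, hpb, rfl⟩

/-- Criterion for supertruth of a hypothesis-free scheme. -/
theorem supertrue_of (Φ : Scheme) (hh : Φ.hyps = ∅)
    (hΔ : ∀ m n : MV, s(m, n) ∈ Φ.dv → m ≠ n)
    (H : ∀ σ : Subst, ∀ E : Set (Sym2 MV),
      (∀ m n : MV, s(m, n) ∈ Φ.dv → σ.appMV m ∩ σ.appMV n = ∅) →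
      (∀ m' n' m n : MV, s(m', n') ∈ Φ.dv → m ∈ σ.appMV m' → n ∈ σ.appMV n' → s(m, n) ∈ E) →
      ∀ i j : ℕ, s(MV.vr i, MV.vr j) ∉ E →
      ∀ τ : OSubst, (∀ m n : MV, s(m, n) ∈ E → τ.appVars m ∩ τ.appVars n = ∅) →
      ∀ D : Type, Nonempty D → ∀ ρ : ℕ → D,
        FM.eval ρ (((Φ.concl.substMF σ).transfAux i j false).osubst τ)) :
    Φ.Supertrue := by
  intro Ψ hΨ _ Ξ hΞ i j hij
  have refl : InstC Φ.concl Φ.dv Φ.concl Φ.dv := by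
    refine ⟨Subst.ident, ?_, (MF.substMF_ident _).symm, ?_⟩
    · intro m n hmn
      have := hΔ m n hmn
      simp only [Subst.appMV_ident]
      rw [Set.eq_empty_iff_forall_notMem]
      rintro p ⟨hp, hq⟩
      exact this (Eq.trans (Set.mem_singleton_iff.1 hp).symm (Set.mem_singleton_iff.1 hq))
    · rintro q ⟨m, n, p, r, hmn, hp, hr, rfl⟩
      rw [Subst.appMV_ident, Set.mem_singleton_iff] at hp hr
      rw [hp, hr]
      exact hmn
  have h1 : InstC Φ.concl Φ.dv Ψ.concl Ψ.dv := by
    rcases hΨ with rfl | ⟨σ, a, -, b, c⟩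
    · exact refl
    · exact ⟨σ, a, b, c⟩
  have h2 : InstC Φ.concl Φ.dv Ξ.concl Ξ.dv := by
    rcases hΞ with rfl | ⟨σ, a, -, b, c⟩
    · exact h1
    · exact h1.trans ⟨σ, a, b, c⟩
  obtain ⟨σ, a, b, c⟩ := h2
  intro τ hτ D hD _ ρ
  have := H σ Ξ.dv a (fun m' n' m n h hm hn => c ⟨m', n', m, n, h, hm, hn, rfl⟩) i j hij τ hτ D hD ρ
  simpa only [Scheme.transform, MF.transform, b] using this

theorem MF.transfAux_of_notMem (i j : ℕ) (A : MF) (h : MV.vr j ∉ A.OC) (b : Bool) :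
    A.transfAux i j b = A := by
  induction A generalizing b with
  | phi k => rfl
  | eq k l =>
    simp only [MF.OC, Set.mem_insert_iff, Set.mem_singleton_iff, MV.vr.injEq, not_or] at h
    simp [MF.transfAux, Ne.symm h.1, Ne.symm h.2]
  | imp a c iha ihc =>
    simp only [MF.OC, Set.mem_union, not_or] at h
    simp [MF.transfAux, iha h.1, ihc h.2]
  | not a ih => simp [MF.transfAux, ih h]
  | all k a ih =>
    simp only [MF.OC, Set.mem_insert_iff, MV.vr.injEq, not_or] at h
    simp [MF.transfAux, ih h.2, Ne.symm h.1]

theorem MF.OC_transfAux_true (i j : ℕ) (A : MF) (b : Bool) :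
    (A.transfAux i j b).OC ⊆ insert (MV.vr i) A.OC := by
  induction A generalizing b with
  | phi k => simp [MF.transfAux]
  | eq k l =>
    intro m
    simp only [MF.transfAux, MF.OC, Set.mem_insert_iff, Set.mem_singleton_iff]
    split_ifs <;> tauto
  | imp a c iha ihc =>
    intro m hm
    have h1 := @iha b m
    have h2 := @ihc b m
    simp only [MF.transfAux, MF.OC, Set.mem_insert_iff, Set.mem_union] at *
    tauto
  | not a ih => exact ih b
  | all k a ih =>
    intro m
    have h1 := @ih (b || decide (k = i)) m
    simp only [MF.transfAux, MF.OC, Set.mem_insert_iff] at *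
    split_ifs <;> tauto

theorem MF.OC_transfAux_false (i j : ℕ) (A : MF) :
    (A.transfAux i j false).OC ⊆ A.OC := by
  induction A with
  | phi k => simp [MF.transfAux]
  | eq k l => simp [MF.transfAux]
  | imp a c iha ihc => exact Set.union_subset_union iha ihc
  | not a ih => exact ih
  | all k a ih =>
    by_cases hk : k = i
    · subst hk
      have := MF.OC_transfAux_true k j a true
      simp only [MF.transfAux, MF.OC]
      simpa [Set.insert_subset_iff] using this
    · simp only [MF.transfAux, MF.OC]
      simpa [hk] using Set.insert_subset_insert ih

theorem FM.eval_congr {D : Type} (A : FM) (ρ ρ' : ℕ → D) (h : ∀ v ∈ A.vars, ρ v = ρ' v) :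
    A.eval ρ ↔ A.eval ρ' := by
  induction A generalizing ρ ρ' with
  | eq i j =>
    simp only [FM.eval]
    rw [h i (by simp [FM.vars]), h j (by simp [FM.vars])]
  | imp a b iha ihb =>
    simp only [FM.eval]
    rw [iha ρ ρ' (fun v hv => h v (Or.inl hv)), ihb ρ ρ' (fun v hv => h v (Or.inr hv))]
  | not a ih =>
    simp only [FM.eval]
    rw [ih ρ ρ' h]
  | all i a ih =>
    simp only [FM.eval]
    refine forall_congr' fun d => ih _ _ fun v hv => ?_
    by_cases hvi : v = i
    · subst hvi; simp
    · simp [hvi, h v (Or.inr hv)]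

theorem MF.vars_osubst (τ : OSubst) (A : MF) (v : ℕ) (h : v ∈ (A.osubst τ).vars) :
    ∃ m ∈ A.OC, v ∈ τ.appVars m := by
  induction A with
  | phi i => exact ⟨_, rfl, h⟩
  | eq i j =>
    rcases h with h | h
    · exact ⟨.vr i, Or.inl rfl, h⟩
    · exact ⟨.vr j, Or.inr rfl, h⟩
  | imp a b iha ihb =>
    rcases h with h | h
    · obtain ⟨m, hm, hv⟩ := iha h
      exact ⟨m, Or.inl hm, hv⟩
    · obtain ⟨m, hm, hv⟩ := ihb h
      exact ⟨m, Or.inr hm, hv⟩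
  | not a ih => exact ih h
  | all i a ih =>
    rcases h with h | h
    · exact ⟨.vr i, Or.inl rfl, h⟩
    · obtain ⟨m, hm, hv⟩ := ih h
      exact ⟨m, Or.inr hm, hv⟩

theorem st_ALLdistr : ax_ALLdistr.Supertrue := by
  refine supertrue_of _ rfl (by simp [ax_ALLdistr]) ?_
  intro σ E _ _ i j _ τ _ D _ ρ
  simp only [ax_ALLdistr, MF.substMF, MF.transfAux, MF.osubst, FM.eval]
  intro h1 h2 d
  exact h1 d (h2 d)

theorem st_modalD : ax_modalD.Supertrue := by
  refine supertrue_of _ rfl (by simp [ax_modalD]) ?_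
  intro σ E _ _ i j _ τ _ D ⟨d⟩ ρ
  simp only [ax_modalD, MF.substMF, MF.transfAux, MF.osubst, FM.eval]
  intro h1 h2
  exact h1 d (h2 d)

theorem st_modal4 : ax_modal4.Supertrue := by
  refine supertrue_of _ rfl (by simp [ax_modal4]) ?_
  intro σ E _ _ i j _ τ _ D _ ρ
  by_cases hx : σ.vr 0 = i
  · simp [ax_modal4, MF.substMF, MF.transfAux, MF.osubst, FM.eval, hx]
  · simp [ax_modal4, MF.substMF, MF.transfAux, MF.osubst, FM.eval, hx]

theorem st_modal5 : ax_modal5.Supertrue := by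
  refine supertrue_of _ rfl (by simp [ax_modal5]) ?_
  intro σ E _ _ i j _ τ _ D _ ρ
  by_cases hx : σ.vr 0 = i
  · simp [ax_modal5, MF.substMF, MF.transfAux, MF.osubst, FM.eval, hx]
  · simp [ax_modal5, MF.substMF, MF.transfAux, MF.osubst, FM.eval, hx]

theorem st_vacGen : ax_vacGen.Supertrue := by
  refine supertrue_of _ rfl (by
    intro m n h
    rintro rfl
    simp [ax_vacGen] at h
    obtain ⟨h1, h2⟩ | ⟨h1, h2⟩ := h <;> simp [h1] at h2) ?_
  intro σ E hl hE i j hij τ hτ D _ ρ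
  have hE' : ∀ n ∈ (σ.fm 0).OC, s(MV.vr (σ.vr 0), n) ∈ E := fun n hn =>
    hE (.vr 0) (.fm 0) _ n (by simp [ax_vacGen]) rfl hn
  have hT : (σ.fm 0).transfAux i j (decide (σ.vr 0 = i)) = (σ.fm 0).transfAux i j false := by
    by_cases hx : σ.vr 0 = i
    · have hj : MV.vr j ∉ (σ.fm 0).OC := by
        intro hj
        have := hE' _ hj
        rw [hx] at this
        exact hij this
      rw [MF.transfAux_of_notMem _ _ _ hj, MF.transfAux_of_notMem _ _ _ hj]
    · simp [hx]
  simp only [ax_vacGen, MF.substMF, MF.transfAux, MF.osubst, FM.eval]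
  intro h d
  simp only [Bool.false_or, Bool.false_eq_true, false_and, if_false, hT]
  refine (FM.eval_congr _ _ _ ?_).1 h
  intro v hv
  obtain ⟨m, hm, hvm⟩ := MF.vars_osubst _ _ _ hv
  have hd := hτ _ _ (hE' m (MF.OC_transfAux_false _ _ _ hm))
  have hne : v ≠ τ.vr (σ.vr 0) := by
    intro hv'
    exact (Set.eq_empty_iff_forall_notMem.1 hd) v ⟨hv', hvm⟩
  simp [hne]

theorem st_denot : ax_denot.Supertrue := by
  refine supertrue_of _ rfl (by
    intro m n h
    rintro rfl
    simp [ax_denot] at h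
    obtain ⟨h1, h2⟩ | ⟨h1, h2⟩ := h <;> simp [h1] at h2) ?_
  intro σ E hl hE i j hij τ hτ D _ ρ
  have hxy : s(MV.vr (σ.vr 0), MV.vr (σ.vr 1)) ∈ E :=
    hE (.vr 0) (.vr 1) _ _ (by simp [ax_denot]) rfl rfl
  have hd := hτ _ _ hxy
  have hne : τ.vr (σ.vr 0) ≠ τ.vr (σ.vr 1) := by
    intro h
    exact (Set.eq_empty_iff_forall_notMem.1 hd) _ ⟨rfl, h⟩
  have hn : ¬ (σ.vr 1 = i ∧ σ.vr 0 = j) := by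
    rintro ⟨rfl, rfl⟩
    rw [Sym2.eq_swap] at hxy
    exact hij hxy
  have e : (if σ.vr 1 = i ∧ σ.vr 1 = j then i else σ.vr 1) = σ.vr 1 := by
    split_ifs with h
    · exact h.1.symm
    · rfl
  simp [ax_denot, MF.substMF, MF.transfAux, MF.osubst, FM.eval, hn, hne, e]

theorem st_subst : ax_subst.Supertrue := by
  refine supertrue_of _ rfl (by
    intro m n h
    rintro rfl
    simp [ax_subst] at h
    obtain (⟨h1, h2⟩ | ⟨h1, h2⟩) | (⟨h1, h2⟩ | ⟨h1, h2⟩) := h <;> simp [h1] at h2) ?_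
  intro σ E hl hE i j hij τ hτ D _ ρ
  have hxy : s(MV.vr (σ.vr 0), MV.vr (σ.vr 1)) ∈ E :=
    hE (.vr 0) (.vr 1) _ _ (by simp [ax_subst]) rfl rfl
  have hd := hτ _ _ hxy
  have hne : τ.vr (σ.vr 1) ≠ τ.vr (σ.vr 0) := by
    intro h
    exact (Set.eq_empty_iff_forall_notMem.1 hd) _ ⟨rfl, h.symm⟩
  have hn : ¬ (σ.vr 0 = i ∧ σ.vr 1 = j) := by
    rintro ⟨rfl, rfl⟩
    exact hij hxy
  have e : (if σ.vr 0 = i ∧ σ.vr 0 = j then i else σ.vr 0) = σ.vr 0 := by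
    split_ifs with h
    · exact h.1.symm
    · rfl
  simp [ax_subst, MF.substMF, MF.transfAux, MF.osubst, FM.eval, hn, hne, e]

theorem st_genEq : ax_genEq.Supertrue := by
  refine supertrue_of _ rfl (by simp [ax_genEq]) ?_
  intro σ E _ _ i j _ τ _ D _ ρ
  have e : (if σ.vr 0 = i ∧ σ.vr 0 = j then i else σ.vr 0) = σ.vr 0 := by
    split_ifs with h
    · exact h.1.symm
    · rfl
  have key : ∀ y : ℕ, (¬ ∀ d : D, d = Function.update ρ (τ.vr (σ.vr 0)) d
      (τ.vr (if σ.vr 0 = i ∧ y = j then i else y))) →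
      ∀ d : D, Function.update ρ (τ.vr (σ.vr 0)) d
        (τ.vr (if σ.vr 0 = i ∧ y = j then i else y)) = ρ (τ.vr y) := by
    intro y h d
    by_cases hy : σ.vr 0 = i ∧ y = j
    · exact absurd (by simp [hy]) h
    · rw [if_neg hy] at h ⊢
      by_cases hv : τ.vr y = τ.vr (σ.vr 0)
      · exact absurd (by simp [hv]) h
      · simp [hv]
  simp only [ax_genEq, MF.substMF, MF.transfAux, MF.osubst, FM.eval, Bool.false_or,
    decide_eq_true_eq, e, Bool.false_eq_true, false_and, if_false, Function.update_self]
  intro h1 h2 h3 d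
  rw [key _ h1, key _ h2, h3]

/-- The schemes ALLdistr, modalD, modal4, modal5, vacGen, denot, subst,
and genEq are supertrue. -/
theorem axioms_supertrue :
    ax_ALLdistr.Supertrue ∧ ax_modalD.Supertrue ∧ ax_modal4.Supertrue ∧
    ax_modal5.Supertrue ∧ ax_vacGen.Supertrue ∧ ax_denot.Supertrue ∧
    ax_subst.Supertrue ∧ ax_genEq.Supertrue := by
  exact ⟨st_ALLdistr, st_modalD, st_modal4, st_modal5, st_vacGen, st_denot, st_subst, st_genEq⟩
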